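/- For every real number α with 0 < α < 2, every nonnegative integer n, and every real x, the fractional Laplacian of the over-scaled Hermite function of even index satisfies (-Δ)^{α/2} \widetilde{H}_{2n}(x) = 2^{α} · ((-1)^{n} √((2n)!) / (2^{n} n!)) · (Γ(n + α/2 + 1/2) / Γ(n + 1/2)) · ₁F₁(n + α/2 + 1/2, 1/2; -x²). -/

import Mathlib

/-!
On the Fourier side everything is explicit. Since `e^{-x²} Hₘ(x) = (-1)ᵐ (d/dx)ᵐ e^{-x²}`, its
Fourier integral is `(-iξ)ᵐ √π e^{-ξ²/4}` (`integral_exp_mul_hermiteH`); for `m = 2n` this is the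
even real function `(-1)ⁿ √π ξ^{2n} e^{-ξ²/4}`. Multiplying by `|ξ|^α` and inverting leaves, up to a
constant, `∫ |ξ|^s e^{-ξ²/4} e^{ixξ} dξ` with `s = α + 2n`. By parity it is twice the integral of
`ξ^s e^{-ξ²/4} cos(xξ)` over the half line (`integral_abs_rpow_mul_exp_mul_character`), and
integrating the cosine series term by term, each term being a Gamma integral, gives
`2^s Γ((s+1)/2) ₁F₁((s+1)/2, 1/2; -x²)` (`integral_rpow_mul_exp_mul_cos`). The interchange is
justified by absolute convergence of the `₁F₁` series, which is dominated by an exponential series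
(`summable_oneF1`). The constants match through `(2k)! = 4ᵏ k! (1/2)ₖ` and
`Γ(n + 1/2) = (1/2)ₙ √π`.
-/

open MeasureTheory Real Complex

noncomputable section

/-- Physicists' Hermite polynomials via the three-term recurrence. -/
def hermiteH : ℕ → ℝ → ℝ
  | 0, _ => 1
  | 1, x => 2 * x
  | (n + 2), x => 2 * x * hermiteH (n + 1) x - 2 * (n + 1) * hermiteH n x

/-- Over-scaled Hermite functions `H̃ₙ(x) = (2ⁿ n!)^{-1/2} e^{-x²} Hₙ(x)`. -/
def overHermite (n : ℕ) (x : ℝ) : ℝ :=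
  Real.exp (-x ^ 2) * hermiteH n x / Real.sqrt (2 ^ n * n.factorial)

/-- The confluent hypergeometric function `₁F₁(a, b; x)`. -/
def oneF1 (a b x : ℝ) : ℝ :=
  ∑' k : ℕ, ((ascPochhammer ℝ k).eval a / (ascPochhammer ℝ k).eval b) * x ^ k / k.factorial

/-- Fourier transform `𝓕[u](ξ) = (2π)^{-1/2} ∫ u(x) e^{-i x ξ} dx`. -/
def FT (u : ℝ → ℂ) (ξ : ℝ) : ℂ :=
  (Real.sqrt (2 * Real.pi))⁻¹ * ∫ x : ℝ, u x * Complex.exp (-Complex.I * x * ξ)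

/-- Inverse Fourier transform `𝓕⁻¹[v](x) = (2π)^{-1/2} ∫ v(ξ) e^{i x ξ} dξ`. -/
def IFT (v : ℝ → ℂ) (x : ℝ) : ℂ :=
  (Real.sqrt (2 * Real.pi))⁻¹ * ∫ ξ : ℝ, v ξ * Complex.exp (Complex.I * x * ξ)

/-- Fractional Laplacian `(-Δ)^{α/2} u = 𝓕⁻¹[|ξ|^α 𝓕[u](ξ)]`. -/
def fracLap (α : ℝ) (u : ℝ → ℂ) (x : ℝ) : ℂ :=
  IFT (fun ξ => (|ξ| ^ α : ℝ) * FT u ξ) x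

/-! ### The Fourier integral of `e^{-x²} Hₙ` -/

/-- `Hₙ' = 2x Hₙ - Hₙ₊₁`. By the recurrence this is `Hₙ₊₁' = 2(n+1) Hₙ` in a form that needs no
index shift; consecutive indices are treated together since the recurrence has two steps. -/
lemma hasDerivAt_hermiteH (n : ℕ) (x : ℝ) :
    HasDerivAt (hermiteH n) (2 * x * hermiteH n x - hermiteH (n + 1) x) x := by
  have key : ∀ n : ℕ, HasDerivAt (hermiteH n) (2 * x * hermiteH n x - hermiteH (n + 1) x) x ∧
      HasDerivAt (hermiteH (n + 1))
        (2 * x * hermiteH (n + 1) x - hermiteH (n + 2) x) x := by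
    intro n
    induction n with
    | zero =>
      constructor
      · have := hasDerivAt_const x (1 : ℝ)
        convert! this using 1
        simp [hermiteH]
      · have := (hasDerivAt_id x).const_mul (2 : ℝ)
        convert! this using 1
        simp [hermiteH]
    | succ n ih =>
      refine ⟨ih.2, ?_⟩
      have h := (((hasDerivAt_id x).const_mul (2 : ℝ)).mul ih.2).sub
        (ih.1.const_mul (2 * ((n : ℝ) + 1)))
      convert! h using 1
      simp only [hermiteH, id]
      push_cast
      ring
  exact (key n).1

lemma exists_polynomial_hermiteH (n : ℕ) :
    ∃ p : Polynomial ℝ, ∀ x, hermiteH n x = p.eval x := by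
  have key : ∀ n : ℕ, (∃ p : Polynomial ℝ, ∀ x, hermiteH n x = p.eval x) ∧
      ∃ p : Polynomial ℝ, ∀ x, hermiteH (n + 1) x = p.eval x := by
    intro n
    induction n with
    | zero =>
      exact ⟨⟨1, fun x => by simp [hermiteH]⟩, ⟨2 * Polynomial.X, fun x => by simp [hermiteH]⟩⟩
    | succ n ih =>
      obtain ⟨⟨p, hp⟩, ⟨q, hq⟩⟩ := ih
      refine ⟨⟨q, hq⟩, ⟨2 * Polynomial.X * q - Polynomial.C (2 * ((n : ℝ) + 1)) * p, fun x => ?_⟩⟩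
      simp [hermiteH, hp, hq]
  exact (key n).1

lemma integrable_pow_mul_exp_neg_mul_sq {b : ℝ} (hb : 0 < b) (n : ℕ) :
    Integrable fun x : ℝ => x ^ n * Real.exp (-b * x ^ 2) := by
  have h := integrable_rpow_mul_exp_neg_mul_sq hb (s := n)
    (by linarith [(Nat.cast_nonneg n : (0 : ℝ) ≤ n)])
  simpa using h

lemma integrable_exp_mul_hermiteH (n : ℕ) :
    Integrable fun x : ℝ => Real.exp (-x ^ 2) * hermiteH n x := by
  obtain ⟨p, hp⟩ := exists_polynomial_hermiteH n
  simp only [hp, Polynomial.eval_eq_sum_range, Finset.mul_sum]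
  refine integrable_finsetSum _ fun i _ => ?_
  have h := (integrable_pow_mul_exp_neg_mul_sq one_pos i).const_mul (p.coeff i)
  refine h.congr (Filter.Eventually.of_forall fun x => ?_)
  simp only [neg_mul, one_mul]
  ring

/-- Multiplying an integrable function by a unimodular character keeps it integrable. -/
lemma integrable_mul_character {u : ℝ → ℂ} (hu : Integrable u) (c : ℝ) :
    Integrable fun x : ℝ => u x * Complex.exp (Complex.I * c * x) := by
  refine hu.mul_bdd (c := 1) (by fun_prop) (Filter.Eventually.of_forall fun x => ?_)
  rw [show Complex.I * c * x = ((c * x : ℝ) : ℂ) * Complex.I by push_cast; ring,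
    Complex.norm_exp_ofReal_mul_I]

/-- Since `(e^{-x²} Hₙ)' = -e^{-x²} Hₙ₊₁`, integration by parts shows that raising the index
multiplies the Fourier integral by `-iξ`, and the case `n = 0` is the Gaussian integral. -/
lemma integral_exp_mul_hermiteH (n : ℕ) (ξ : ℝ) :
    ∫ x : ℝ, ((Real.exp (-x ^ 2) * hermiteH n x : ℝ) : ℂ) * Complex.exp (-Complex.I * x * ξ) =
      (-Complex.I * ξ) ^ n * (Real.sqrt π * Real.exp (-ξ ^ 2 / 4) : ℝ) := by
  have hInt : ∀ n : ℕ, Integrable fun x : ℝ =>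
      ((Real.exp (-x ^ 2) * hermiteH n x : ℝ) : ℂ) * Complex.exp (-Complex.I * x * ξ) := by
    intro n
    refine (integrable_mul_character (integrable_exp_mul_hermiteH n).ofReal (-ξ)).congr
      (Filter.Eventually.of_forall fun x => ?_)
    simp only
    congr 2
    push_cast
    ring
  induction n with
  | zero =>
    have h := fourierIntegral_gaussian (b := 1) (by simp) (-ξ : ℂ)
    have hs : ((π : ℂ) / 1) ^ (1 / 2 : ℂ) = (Real.sqrt π : ℝ) := by
      rw [div_one, Real.sqrt_eq_rpow, Complex.ofReal_cpow Real.pi_pos.le]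
      norm_num
    rw [hs] at h
    have e : ((Real.sqrt π * Real.exp (-ξ ^ 2 / 4) : ℝ) : ℂ)
        = (Real.sqrt π : ℝ) * Complex.exp (-(-ξ : ℂ) ^ 2 / (4 * 1)) := by
      push_cast
      congr 2
      ring
    rw [pow_zero, one_mul, e, ← h]
    refine integral_congr_ae (Filter.Eventually.of_forall fun x => ?_)
    simp only [hermiteH]
    push_cast
    rw [mul_one, mul_comm]
    congr 2 <;> ring
  | succ n ih =>
    have hu : ∀ x : ℝ, HasDerivAt (fun x : ℝ => ((Real.exp (-x ^ 2) * hermiteH n x : ℝ) : ℂ))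
        (-(Real.exp (-x ^ 2) * hermiteH (n + 1) x : ℝ) : ℂ) x := by
      intro x
      have h1 : HasDerivAt (fun x : ℝ => Real.exp (-x ^ 2)) (Real.exp (-x ^ 2) * (-(2 * x))) x := by
        have := ((hasDerivAt_pow 2 x).neg).exp
        simpa using this
      have h := (h1.mul (hasDerivAt_hermiteH n x)).ofReal_comp
      convert! h using 1
      push_cast
      ring
    have hv : ∀ x : ℝ, HasDerivAt (fun x : ℝ => Complex.exp (-Complex.I * x * ξ))
        (Complex.exp (-Complex.I * x * ξ) * (-Complex.I * ξ)) x := by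
      intro x
      have h : HasDerivAt (fun x : ℝ => -Complex.I * x * ξ) (-Complex.I * ξ) x := by
        simpa using ((hasDerivAt_id x).ofReal_comp.const_mul (-Complex.I)).mul_const (ξ : ℂ)
      exact h.cexp
    have ibp := integral_mul_deriv_eq_deriv_mul_of_integrable (fun x _ => hu x) (fun x _ => hv x)
      (((hInt n).mul_const (-Complex.I * ξ)).congr (Filter.Eventually.of_forall fun x => by
        simp only [Pi.mul_apply]; ring))
      ((hInt (n + 1)).neg.congr (Filter.Eventually.of_forall fun x => by
        simp only [Pi.mul_apply, Pi.neg_apply]; ring))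
      (hInt n)
    simp only [neg_mul, integral_neg, neg_neg] at ibp
    simp only [neg_mul] at ih ⊢
    rw [← ibp]
    simp only [← mul_assoc, mul_neg, integral_neg]
    have e : ∀ x : ℝ, ((Real.exp (-x ^ 2) * hermiteH n x : ℝ) : ℂ) *
        Complex.exp (-(Complex.I * x * ξ)) * Complex.I * ξ =
        ((Real.exp (-x ^ 2) * hermiteH n x : ℝ) : ℂ) *
        Complex.exp (-(Complex.I * x * ξ)) * (Complex.I * ξ) := fun x => by ring
    simp only [e]
    rw [integral_mul_const, ih]
    ring

/-! ### Pochhammer symbols and the `₁F₁` series -/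

lemma Gamma_add_nat_eq {a : ℝ} (ha : 0 < a) (k : ℕ) :
    Real.Gamma (a + k) = (ascPochhammer ℝ k).eval a * Real.Gamma a := by
  induction k with
  | zero => simp
  | succ k ih =>
    rw [Nat.cast_succ, ← add_assoc, Real.Gamma_add_one (by positivity), ih,
      ascPochhammer_succ_eval]
    ring

lemma factorial_two_mul (k : ℕ) :
    ((2 * k).factorial : ℝ) = 4 ^ k * k.factorial * (ascPochhammer ℝ k).eval (1 / 2) := by
  induction k with
  | zero => simp
  | succ k ih =>
    rw [show 2 * (k + 1) = 2 * k + 1 + 1 by ring, Nat.factorial_succ, Nat.factorial_succ,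
      Nat.factorial_succ k, ascPochhammer_succ_eval]
    push_cast
    rw [ih]
    ring

lemma ascPochhammer_half_pos (k : ℕ) : 0 < (ascPochhammer ℝ k).eval (1 / 2 : ℝ) :=
  ascPochhammer_pos k _ (by norm_num)

/-- The comparison `a + j ≤ (2a + 1)(1/2 + j)` in each factor dominates the `₁F₁` series by an
exponential series. -/
lemma ascPochhammer_le {a : ℝ} (ha : 0 < a) (k : ℕ) :
    (ascPochhammer ℝ k).eval a ≤ (2 * a + 1) ^ k * (ascPochhammer ℝ k).eval (1 / 2) := by
  induction k with
  | zero => simp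
  | succ k ih =>
    rw [ascPochhammer_succ_eval, ascPochhammer_succ_eval, pow_succ]
    have h : a + k ≤ (2 * a + 1) * (1 / 2 + k) := by
      have : 0 ≤ a * k := by positivity
      nlinarith
    calc _ ≤ ((2 * a + 1) ^ k * (ascPochhammer ℝ k).eval (1 / 2)) *
          ((2 * a + 1) * (1 / 2 + k)) := by
          have := ascPochhammer_half_pos k
          gcongr
      _ = _ := by ring

lemma summable_oneF1 {a : ℝ} (ha : 0 < a) {y : ℝ} (hy : 0 ≤ y) :
    Summable fun k : ℕ => (ascPochhammer ℝ k).eval a / (ascPochhammer ℝ k).eval (1 / 2)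
      * y ^ k / k.factorial := by
  refine Summable.of_nonneg_of_le (fun k => ?_) (fun k => ?_)
    (Real.summable_pow_div_factorial ((2 * a + 1) * y))
  · have := ascPochhammer_half_pos k
    have := ascPochhammer_pos k a ha
    positivity
  · have h := ascPochhammer_half_pos k
    rw [mul_pow]
    gcongr
    rw [div_le_iff₀ h]
    exact ascPochhammer_le ha k

/-! ### Gaussian cosine integrals -/

/-- The moments of the Gaussian on the half line, in Pochhammer form. -/
lemma integral_rpow_mul_exp_sq {s : ℝ} (hs : -1 < s) (k : ℕ) :
    ∫ ξ in Set.Ioi (0 : ℝ), ξ ^ (s + 2 * k) * Real.exp (-(1 / 4) * ξ ^ 2) =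
      2 ^ s * Real.Gamma ((s + 1) / 2) * (4 ^ k * (ascPochhammer ℝ k).eval ((s + 1) / 2)) := by
  have h := integral_rpow_mul_exp_neg_mul_rpow (p := 2) (q := s + 2 * k) (b := 1 / 4) two_pos
    (by linarith [(Nat.cast_nonneg k : (0 : ℝ) ≤ k)]) (by norm_num)
  simp only [Real.rpow_two] at h
  rw [h, show (s + 2 * k + 1) / 2 = (s + 1) / 2 + k by ring, Gamma_add_nat_eq (by linarith)]
  have e : (1 / 4 : ℝ) ^ (-(s + 2 * k + 1) / 2) = 2 * 2 ^ s * 4 ^ k := by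
    rw [show (1 / 4 : ℝ) = 2 ^ (-2 : ℝ) by norm_num [Real.rpow_neg], ← Real.rpow_mul two_pos.le,
      show (-2 : ℝ) * (-(s + 2 * k + 1) / 2) = 1 + s + (2 * k : ℕ) by push_cast; ring,
      Real.rpow_add two_pos, Real.rpow_add two_pos, Real.rpow_natCast, pow_mul]
    norm_num
  rw [e]
  ring

/-- Integrating the cosine series term by term against the Gaussian gives the `₁F₁` series,
because `(2k)! = 4ᵏ k! (1/2)ₖ`. -/
lemma integral_rpow_mul_exp_mul_cos {s : ℝ} (hs : -1 < s) (x : ℝ) :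
    ∫ ξ in Set.Ioi (0 : ℝ), ξ ^ s * Real.exp (-(1 / 4) * ξ ^ 2) * Real.cos (x * ξ) =
      2 ^ s * Real.Gamma ((s + 1) / 2) * oneF1 ((s + 1) / 2) (1 / 2) (-x ^ 2) := by
  -- The `k`-th term of the cosine series, with `x` separated from the power of `ξ`.
  set F : ℕ → ℝ → ℝ := fun k ξ =>
    ((-x ^ 2) ^ k / (2 * k).factorial) * (ξ ^ (s + 2 * k) * Real.exp (-(1 / 4) * ξ ^ 2)) with hF
  have hFeq : ∀ k, ∀ ξ ∈ Set.Ioi (0 : ℝ), F k ξ =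
      ξ ^ s * Real.exp (-(1 / 4) * ξ ^ 2) * ((-1) ^ k * (x * ξ) ^ (2 * k) / (2 * k).factorial) := by
    intro k ξ hξ
    have : ξ ^ (s + 2 * k) = ξ ^ s * ξ ^ (2 * k) := by
      rw [Real.rpow_add hξ, ← Real.rpow_natCast]
      push_cast
      rfl
    simp only [hF]
    rw [this, neg_pow, mul_pow, ← pow_mul]
    ring
  have hInt : ∀ k, Integrable (F k) (volume.restrict (Set.Ioi 0)) := fun k =>
    (integrableOn_rpow_mul_exp_neg_mul_sq (by norm_num)
      (by linarith [(Nat.cast_nonneg k : (0 : ℝ) ≤ k)])).const_mul _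
  -- Used with `c = -x²` for the value of the sum and with `c = x²` for absolute convergence.
  have hI : ∀ c : ℝ, ∀ k : ℕ,
      c ^ k / (2 * k).factorial *
        (2 ^ s * Real.Gamma ((s + 1) / 2) * (4 ^ k * (ascPochhammer ℝ k).eval ((s + 1) / 2))) =
      2 ^ s * Real.Gamma ((s + 1) / 2) * ((ascPochhammer ℝ k).eval ((s + 1) / 2) /
        (ascPochhammer ℝ k).eval (1 / 2) * c ^ k / k.factorial) := by
    intro c k
    rw [factorial_two_mul]
    have := ascPochhammer_half_pos k
    field_simp
  have hnorm : ∀ k, ∫ ξ in Set.Ioi (0 : ℝ), ‖F k ξ‖ =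
      2 ^ s * Real.Gamma ((s + 1) / 2) * ((ascPochhammer ℝ k).eval ((s + 1) / 2) /
        (ascPochhammer ℝ k).eval (1 / 2) * (x ^ 2) ^ k / k.factorial) := by
    intro k
    rw [← hI, ← integral_rpow_mul_exp_sq hs, ← integral_const_mul]
    refine setIntegral_congr_fun measurableSet_Ioi fun ξ hξ => ?_
    have : 0 < ξ := hξ
    simp only [hF, norm_mul, norm_div, norm_pow, norm_neg, RCLike.norm_natCast, Real.norm_eq_abs,
      sq_abs, Real.abs_exp]
    rw [abs_of_nonneg (Real.rpow_nonneg this.le _)]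
  have hsum := hasSum_integral_of_summable_integral_norm hInt (by
    simp only [hnorm]
    exact (summable_oneF1 (by linarith) (sq_nonneg x)).mul_left _)
  have hts : ∫ ξ in Set.Ioi (0 : ℝ), (∑' k, F k ξ) =
      ∫ ξ in Set.Ioi (0 : ℝ), ξ ^ s * Real.exp (-(1 / 4) * ξ ^ 2) * Real.cos (x * ξ) := by
    refine setIntegral_congr_fun measurableSet_Ioi fun ξ hξ => ?_
    simp only [hFeq _ ξ hξ]
    exact ((Real.hasSum_cos (x * ξ)).mul_left _).tsum_eq
  rw [← hts, ← hsum.tsum_eq, oneF1, ← tsum_mul_left]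
  refine tsum_congr fun k => ?_
  rw [← hI, ← integral_rpow_mul_exp_sq hs, ← integral_const_mul]

lemma integrable_abs_rpow_mul_exp {s : ℝ} (hs : 0 ≤ s) :
    Integrable fun ξ : ℝ => |ξ| ^ s * Real.exp (-(1 / 4) * |ξ| ^ 2) := by
  obtain ⟨m, hm⟩ := exists_nat_ge s
  have h0 := integrable_pow_mul_exp_neg_mul_sq (b := 1 / 4) (by norm_num) 0
  have h1 := integrable_pow_mul_exp_neg_mul_sq (b := 1 / 4) (by norm_num) (2 * m)
  refine (h0.add h1).mono' ?_ (Filter.Eventually.of_forall fun ξ => ?_)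
  · exact (Continuous.mul (continuous_abs.rpow_const fun _ => Or.inr hs)
      (by fun_prop)).aestronglyMeasurable
  · have hb : |ξ| ^ s ≤ 1 + ξ ^ (2 * m) := by
      have hp : 0 ≤ ξ ^ (2 * m) := (even_two_mul m).pow_nonneg ξ
      rcases le_total |ξ| 1 with h | h
      · linarith [Real.rpow_le_one (abs_nonneg ξ) h hs]
      · have h2 : |ξ| ^ s ≤ |ξ| ^ ((2 * m : ℕ) : ℝ) := by
          apply Real.rpow_le_rpow_of_exponent_le h
          push_cast
          linarith [(Nat.cast_nonneg m : (0 : ℝ) ≤ m)]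
        rw [Real.rpow_natCast, (even_two_mul m).pow_abs] at h2
        linarith
    simp only [norm_mul, Real.norm_eq_abs, Real.abs_exp, Pi.add_apply, sq_abs, pow_zero]
    rw [abs_of_nonneg (Real.rpow_nonneg (abs_nonneg ξ) s), ← add_mul]
    gcongr

/-- The sine part of the character is odd and drops out; the cosine part folds onto the half
line. -/
lemma integral_abs_rpow_mul_exp_mul_character {s : ℝ} (hs : 0 ≤ s) (x : ℝ) :
    ∫ ξ : ℝ, ((|ξ| ^ s * Real.exp (-(1 / 4) * |ξ| ^ 2) : ℝ) : ℂ) *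
        Complex.exp (Complex.I * x * ξ) =
      ((2 * (2 ^ s * Real.Gamma ((s + 1) / 2) *
        oneF1 ((s + 1) / 2) (1 / 2) (-x ^ 2)) : ℝ) : ℂ) := by
  set J := ∫ ξ : ℝ, ((|ξ| ^ s * Real.exp (-(1 / 4) * |ξ| ^ 2) : ℝ) : ℂ) *
        Complex.exp (Complex.I * x * ξ) with hJ
  have hInt : Integrable fun ξ : ℝ => ((|ξ| ^ s * Real.exp (-(1 / 4) * |ξ| ^ 2) : ℝ) : ℂ) *
        Complex.exp (Complex.I * x * ξ) :=
    integrable_mul_character (integrable_abs_rpow_mul_exp hs).ofReal x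
  have hFneg : Integrable fun ξ : ℝ => ((|-ξ| ^ s * Real.exp (-(1 / 4) * |-ξ| ^ 2) : ℝ) : ℂ) *
        Complex.exp (Complex.I * x * ((-ξ : ℝ) : ℂ)) := hInt.comp_neg
  -- Averaging the integral with its reflection turns the character into a cosine.
  have hJneg : ∫ ξ : ℝ, ((|-ξ| ^ s * Real.exp (-(1 / 4) * |-ξ| ^ 2) : ℝ) : ℂ) *
        Complex.exp (Complex.I * x * ((-ξ : ℝ) : ℂ)) = J :=
    integral_neg_eq_self (fun ξ : ℝ => ((|ξ| ^ s * Real.exp (-(1 / 4) * |ξ| ^ 2) : ℝ) : ℂ) *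
        Complex.exp (Complex.I * x * ξ)) volume
  have h2 : J + J = ∫ ξ : ℝ, ((2 * (|ξ| ^ s * Real.exp (-(1 / 4) * |ξ| ^ 2) *
      Real.cos (x * |ξ|)) : ℝ) : ℂ) := by
    nth_rewrite 2 [← hJneg]
    rw [hJ, ← integral_add hInt hFneg]
    refine integral_congr_ae (Filter.Eventually.of_forall fun ξ => ?_)
    have hc : Real.cos (x * |ξ|) = Real.cos (x * ξ) := by
      rcases abs_choice ξ with h | h <;> rw [h]
      rw [mul_neg, Real.cos_neg]
    simp only [abs_neg, hc]
    push_cast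
    rw [Complex.cos]
    ring_nf
  rw [integral_complex_ofReal, integral_const_mul,
    integral_comp_abs (f := fun ξ => ξ ^ s * Real.exp (-(1 / 4) * ξ ^ 2) * Real.cos (x * ξ)),
    integral_rpow_mul_exp_mul_cos (by linarith)] at h2
  push_cast at h2 ⊢
  linear_combination h2 / 2

/-! ### The fractional Laplacian -/

lemma FT_overHermite_even (n : ℕ) (ξ : ℝ) :
    FT (fun y => (overHermite (2 * n) y : ℂ)) ξ =
      (((Real.sqrt (2 * π))⁻¹ * ((-1) ^ n * Real.sqrt π / Real.sqrt (2 ^ (2 * n) *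
        (2 * n).factorial)) * (ξ ^ (2 * n) * Real.exp (-ξ ^ 2 / 4)) : ℝ) : ℂ) := by
  have e : ∀ y : ℝ, (overHermite (2 * n) y : ℂ) * Complex.exp (-Complex.I * y * ξ) =
      (((Real.exp (-y ^ 2) * hermiteH (2 * n) y : ℝ) : ℂ) * Complex.exp (-Complex.I * y * ξ)) *
        ((Real.sqrt (2 ^ (2 * n) * (2 * n).factorial))⁻¹ : ℝ) := by
    intro y
    rw [overHermite, div_eq_mul_inv]
    push_cast
    ring
  have hp : (-Complex.I * ξ) ^ (2 * n) = (-1) ^ n * (ξ : ℂ) ^ (2 * n) := by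
    rw [pow_mul, pow_mul, mul_pow, neg_sq, Complex.I_sq, mul_pow]
  rw [FT]
  simp only [e]
  rw [integral_mul_const, integral_exp_mul_hermiteH, hp]
  push_cast
  ring

theorem fracLap_overHermite_even (α : ℝ) (hα₀ : 0 < α) (hα₂ : α < 2) (n : ℕ) (x : ℝ) :
    fracLap α (fun y => (overHermite (2 * n) y : ℂ)) x =
      ↑((2 : ℝ) ^ α * ((-1 : ℝ) ^ n * Real.sqrt ((2 * n).factorial) / (2 ^ n * n.factorial)) *
          (Real.Gamma ((n : ℝ) + α / 2 + 1 / 2) / Real.Gamma ((n : ℝ) + 1 / 2)) *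
          oneF1 ((n : ℝ) + α / 2 + 1 / 2) (1 / 2) (-x ^ 2)) := by
  have hpt : ∀ ξ : ℝ, (|ξ| ^ α : ℝ) * FT (fun y => (overHermite (2 * n) y : ℂ)) ξ *
      Complex.exp (Complex.I * x * ξ) =
      (((Real.sqrt (2 * π))⁻¹ * ((-1) ^ n * Real.sqrt π / Real.sqrt (2 ^ (2 * n) *
        (2 * n).factorial)) : ℝ) : ℂ) *
      (((|ξ| ^ (α + 2 * n) * Real.exp (-(1 / 4) * |ξ| ^ 2) : ℝ) : ℂ) *
        Complex.exp (Complex.I * x * ξ)) := by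
    intro ξ
    have h1 : |ξ| ^ (α + 2 * n) = |ξ| ^ α * ξ ^ (2 * n) := by
      rw [Real.rpow_add_of_nonneg (abs_nonneg ξ) hα₀.le (by positivity),
        show (2 * n : ℝ) = ((2 * n : ℕ) : ℝ) by push_cast; rfl, Real.rpow_natCast,
        (even_two_mul n).pow_abs]
    rw [FT_overHermite_even, h1, sq_abs, show -(1 / 4) * ξ ^ 2 = -ξ ^ 2 / 4 by ring]
    push_cast
    ring
  rw [fracLap, IFT]
  simp only [hpt]
  rw [integral_const_mul, integral_abs_rpow_mul_exp_mul_character (by positivity)]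
  norm_cast
  rw [show (α + (2 * n : ℕ) + 1) / 2 = (n : ℝ) + α / 2 + 1 / 2 by push_cast; ring,
    Real.rpow_add two_pos, Real.rpow_natCast, add_comm (n : ℝ) (1 / 2),
    Gamma_add_nat_eq (by norm_num), Real.Gamma_one_half_eq]
  have hP := ascPochhammer_half_pos n
  have hfac := factorial_two_mul n
  have hf : (0 : ℝ) < (2 * n).factorial := by positivity
  have hq : Real.sqrt ((2 * n).factorial : ℝ) ^ 2 = _ :=
    (Real.sq_sqrt hf.le).trans hfac
  have hq0 : 0 < Real.sqrt ((2 * n).factorial : ℝ) := Real.sqrt_pos.mpr hf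
  have hp0 : 0 < Real.sqrt π := Real.sqrt_pos.mpr Real.pi_pos
  have h2 : Real.sqrt 2 ^ 2 = 2 := Real.sq_sqrt two_pos.le
  have h20 : 0 < Real.sqrt 2 := Real.sqrt_pos.mpr two_pos
  have hs : Real.sqrt (2 ^ (2 * n) * ((2 * n).factorial : ℝ)) =
      2 ^ n * Real.sqrt ((2 * n).factorial : ℝ) := by
    rw [Real.sqrt_mul (by positivity), mul_comm 2 n, pow_mul, Real.sqrt_sq (by positivity)]
  push_cast
  rw [hs, Real.sqrt_mul two_pos.le, pow_mul, show (2 : ℝ) ^ 2 = 4 by norm_num]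
  generalize Real.sqrt ((2 * n).factorial : ℝ) = q at *
  generalize Real.sqrt π = p at *
  generalize Real.sqrt 2 = t at *
  generalize Polynomial.eval (1 / 2) (ascPochhammer ℝ n) = P at *
  field_simp
  rw [hq, h2]
  ring
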